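/- arXiv:math/0606213 — 2 statements merged into one kernel-verified Lean document; each statement's English description precedes it below -/
import Mathlib

section
/- Ξ_N = {w ∈ X_ℂ : there exists ξ ∈ Hor(X) with w·ξ = 1}; that is, a point w of the complex hyperboloid X_ℂ lies in the G-saturation of the complexified horospherical orbit N_ℂ·x₀ if and only if w pairs to 1 with some real null vector ξ with ξ₀ > 0. -/
open Matrix

/-- The Lorentz form `diag(1,-1,-1)`. -/
noncomputable def eta3 : Matrix (Fin 3) (Fin 3) ℝ := Matrix.diagonal ![1, -1, -1]

/-- `G = SO_e(1,2)`. -/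
noncomputable def Gso : Set (Matrix (Fin 3) (Fin 3) ℝ) :=
  {g | gᵀ * eta3 * g = eta3 ∧ g.det = 1 ∧ 0 < g 0 0}

/-- Action of a real matrix on `ℂ³`. -/
noncomputable def act (g : Matrix (Fin 3) (Fin 3) ℝ) (z : Fin 3 → ℂ) : Fin 3 → ℂ :=
  (g.map (fun x : ℝ => (x : ℂ))).mulVec z

/-- `Q(z) = z₀² - z₁² - z₂²` on `ℂ³`. -/
def Qc (z : Fin 3 → ℂ) : ℂ := z 0 ^ 2 - z 1 ^ 2 - z 2 ^ 2

/-- `Q(y) = y₀² - y₁² - y₂²` on `ℝ³`. -/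
def Qr (y : Fin 3 → ℝ) : ℝ := y 0 ^ 2 - y 1 ^ 2 - y 2 ^ 2

/-- The unipotent matrices `n_z`. -/
noncomputable def nmat (z : ℂ) : Matrix (Fin 3) (Fin 3) ℂ :=
  !![1 + z ^ 2 / 2, z, -(z ^ 2) / 2;
     z, 1, -z;
     z ^ 2 / 2, z, 1 - z ^ 2 / 2]

/-- The base point `x₀ = (1,0,0)`. -/
def x0c : Fin 3 → ℂ := ![1, 0, 0]

/-- `Ξ_N = G·N_ℂ·x₀`. -/
noncomputable def XiN : Set (Fin 3 → ℂ) :=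
  {w | ∃ g ∈ Gso, ∃ z : ℂ, w = act g ((nmat z).mulVec x0c)}

/-- The horocycle space `Hor(X) = {ξ ∈ ℝ³ : Q(ξ) = 0, ξ₀ > 0}`. -/
def Hor : Set (Fin 3 → ℝ) := {ξ | Qr ξ = 0 ∧ 0 < ξ 0}

/-!
`N_ℂ` fixes the null vector `e = (1,0,1)`, and the horosphere `{w ∈ X_ℂ : w·e = 1}` is the single
orbit `N_ℂ·x₀`: on it `w₀ - w₂ = 1`, so `Q(w) = 1` determines `w₀ + w₂` from `w₁`. Since `G`
preserves the bilinear form, `w ∈ g·N_ℂ·x₀` if and only if `Q(w) = 1` and `w·(g e) = 1`. Finally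
`Hor(X) = G·e`: a reversed Cauchy–Schwarz inequality keeps `G·e` inside the forward cone, and
conversely a boost scales `e` to any height and a rotation turns it to any direction.
-/

/-- The Lorentz bilinear form `x·y = x₀y₀ - x₁y₁ - x₂y₂`, over any commutative ring so that it
serves both `ℝ³` and `ℂ³`. -/
def lorentzForm (R : Type*) [CommRing R] : LinearMap.BilinForm R (Fin 3 → R) :=
  toBilin' (diagonal ![1, -1, -1])

section LorentzForm

variable {R : Type*} [CommRing R]

theorem lorentzForm_apply (x y : Fin 3 → R) :
    lorentzForm R x y = x 0 * y 0 - x 1 * y 1 - x 2 * y 2 := by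
  simp [lorentzForm, toBilin'_apply', dotProduct, mulVec_diagonal, Fin.sum_univ_three,
    sub_eq_add_neg]

theorem lorentzForm_mulVec_mulVec {g : Matrix (Fin 3) (Fin 3) R}
    (hg : gᵀ * diagonal ![1, -1, -1] * g = diagonal ![1, -1, -1]) (x y : Fin 3 → R) :
    lorentzForm R (g *ᵥ x) (g *ᵥ y) = lorentzForm R x y := by
  have hcomp := toBilin'_comp (diagonal ![1, -1, -1]) g g
  rw [hg] at hcomp
  exact LinearMap.congr_fun₂ hcomp x y

end LorentzForm

theorem Qc_eq_lorentzForm (z : Fin 3 → ℂ) : Qc z = lorentzForm ℂ z z := by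
  rw [Qc, lorentzForm_apply]
  ring

theorem Qr_eq_lorentzForm (y : Fin 3 → ℝ) : Qr y = lorentzForm ℝ y y := by
  rw [Qr, lorentzForm_apply]
  ring

theorem lorentzForm_nonneg_of_forward {x y : Fin 3 → ℝ} (hQx : 0 ≤ Qr x) (hx : 0 ≤ x 0)
    (hQy : 0 ≤ Qr y) (hy : 0 ≤ y 0) : 0 ≤ lorentzForm ℝ x y := by
  have hle_sq : (x 1 * y 1 + x 2 * y 2) ^ 2 ≤ (x 0 * y 0) ^ 2 := calc
    (x 1 * y 1 + x 2 * y 2) ^ 2 ≤ (x 1 ^ 2 + x 2 ^ 2) * (y 1 ^ 2 + y 2 ^ 2) := by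
      linarith [sq_nonneg (x 1 * y 2 - x 2 * y 1)]
    _ ≤ x 0 ^ 2 * y 0 ^ 2 := by
      unfold Qr at hQx hQy
      gcongr <;> linarith
    _ = (x 0 * y 0) ^ 2 := by ring
  have hle : x 1 * y 1 + x 2 * y 2 ≤ x 0 * y 0 := le_of_sq_le_sq hle_sq (mul_nonneg hx hy)
  rw [lorentzForm_apply]
  linarith

section Gso

variable {g h : Matrix (Fin 3) (Fin 3) ℝ}

theorem lorentzForm_mulVec_of_mem_Gso (hg : g ∈ Gso) (x y : Fin 3 → ℝ) :
    lorentzForm ℝ (g *ᵥ x) (g *ᵥ y) = lorentzForm ℝ x y :=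
  lorentzForm_mulVec_mulVec hg.1 x y

theorem Qr_mulVec_of_mem_Gso (hg : g ∈ Gso) (x : Fin 3 → ℝ) : Qr (g *ᵥ x) = Qr x := by
  simp only [Qr_eq_lorentzForm, lorentzForm_mulVec_of_mem_Gso hg]

-- Otherwise `-g x` would lie in the closed forward cone together with `g e₀`, although
-- `(g e₀)·(-g x) = -x₀ < 0`.
theorem mulVec_apply_zero_pos_of_mem_Gso (hg : g ∈ Gso) {x : Fin 3 → ℝ} (hQx : 0 ≤ Qr x)
    (hx : 0 < x 0) : 0 < (g *ᵥ x) 0 := by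
  by_contra! hneg
  have hQ_time : 0 ≤ Qr (g *ᵥ Pi.single 0 1) := by
    rw [Qr_mulVec_of_mem_Gso hg]
    simp [Qr]
  have htime : 0 ≤ (g *ᵥ Pi.single 0 1) 0 := by
    simpa using hg.2.2.le
  have hQ_neg : 0 ≤ Qr (-(g *ᵥ x)) := by
    simpa [Qr_eq_lorentzForm, lorentzForm_mulVec_of_mem_Gso hg] using hQx
  have hform_nonneg := lorentzForm_nonneg_of_forward hQ_time htime hQ_neg (neg_nonneg.mpr hneg)
  have hform : lorentzForm ℝ (g *ᵥ Pi.single 0 1) (-(g *ᵥ x)) = -x 0 := by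
    rw [map_neg, lorentzForm_mulVec_of_mem_Gso hg, lorentzForm_apply]
    simp
  linarith

theorem mulVec_mem_Hor_of_mem_Gso (hg : g ∈ Gso) {ξ : Fin 3 → ℝ} (hξ : ξ ∈ Hor) :
    g *ᵥ ξ ∈ Hor :=
  ⟨(Qr_mulVec_of_mem_Gso hg ξ).trans hξ.1, mulVec_apply_zero_pos_of_mem_Gso hg hξ.1.ge hξ.2⟩

theorem mul_mem_Gso (hg : g ∈ Gso) (hh : h ∈ Gso) : g * h ∈ Gso := by
  refine ⟨?_, by rw [det_mul, hg.2.1, hh.2.1, one_mul], ?_⟩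
  · calc (g * h)ᵀ * eta3 * (g * h) = hᵀ * (gᵀ * eta3 * g) * h := by
          simp only [transpose_mul, Matrix.mul_assoc]
      _ = eta3 := by rw [hg.1, hh.1]
  · have hQ : 0 ≤ Qr (h *ᵥ Pi.single 0 1) := by
      rw [Qr_mulVec_of_mem_Gso hh]
      simp [Qr]
    have hpos := mulVec_apply_zero_pos_of_mem_Gso hg hQ (by simpa using hh.2.2)
    rwa [mulVec_mulVec, mulVec_single_one, col_apply] at hpos

end Gso

section Transitivity

/-- The rotation in `K ⊆ G` that takes the direction `(0,1)` of the spatial plane to the unit vector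
`(u,v)`. -/
def rotMatrix (u v : ℝ) : Matrix (Fin 3) (Fin 3) ℝ :=
  !![1, 0, 0; 0, v, u; 0, -u, v]

/-- The boost in `A ⊆ G` that scales the null vector `(1,0,1)` by `r = exp t`; its nontrivial
entries are `cosh t` and `sinh t`, written in terms of `r`. -/
noncomputable def boostMatrix (r : ℝ) : Matrix (Fin 3) (Fin 3) ℝ :=
  !![(r + r⁻¹) / 2, 0, (r - r⁻¹) / 2; 0, 1, 0; (r - r⁻¹) / 2, 0, (r + r⁻¹) / 2]

/-- The null vector `e = (1,0,1)` fixed by `N_ℂ`, the base point of `Hor(X)`. -/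
def baseHorocycle : Fin 3 → ℝ := ![1, 0, 1]

theorem rotMatrix_mem_Gso {u v : ℝ} (huv : u ^ 2 + v ^ 2 = 1) : rotMatrix u v ∈ Gso := by
  refine ⟨?_, ?_, by simp [rotMatrix]⟩
  · ext i j
    fin_cases i <;> fin_cases j <;>
      simp [rotMatrix, eta3, mul_apply, Fin.sum_univ_three, diagonal_apply] <;> grind
  · calc (rotMatrix u v).det = v * v + u * u := by simp [rotMatrix, det_fin_three]
      _ = 1 := by linarith

theorem boostMatrix_mem_Gso {r : ℝ} (hr : 0 < r) : boostMatrix r ∈ Gso := by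
  have hr_inv : r * r⁻¹ = 1 := mul_inv_cancel₀ hr.ne'
  refine ⟨?_, ?_, show 0 < (r + r⁻¹) / 2 by positivity⟩
  · ext i j
    fin_cases i <;> fin_cases j <;>
      simp [boostMatrix, eta3, mul_apply, Fin.sum_univ_three, diagonal_apply] <;> grind
  · calc (boostMatrix r).det = ((r + r⁻¹) / 2) ^ 2 - ((r - r⁻¹) / 2) ^ 2 := by
          simp [boostMatrix, det_fin_three, sq]
      _ = 1 := by linear_combination hr_inv

theorem boostMatrix_mulVec_baseHorocycle (r : ℝ) :
    boostMatrix r *ᵥ baseHorocycle = r • baseHorocycle := by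
  ext i
  fin_cases i <;> simp [boostMatrix, baseHorocycle, mulVec, dotProduct, Fin.sum_univ_three] <;> ring

theorem rotMatrix_mulVec_baseHorocycle (u v : ℝ) :
    rotMatrix u v *ᵥ baseHorocycle = ![1, u, v] := by
  ext i
  fin_cases i <;> simp [rotMatrix, baseHorocycle, mulVec, dotProduct, Fin.sum_univ_three]

theorem baseHorocycle_mem_Hor : baseHorocycle ∈ Hor := by
  simp [Hor, Qr, baseHorocycle]

theorem exists_mem_Gso_mulVec_baseHorocycle_eq {ξ : Fin 3 → ℝ} (hξ : ξ ∈ Hor) :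
    ∃ g ∈ Gso, g *ᵥ baseHorocycle = ξ := by
  obtain ⟨hQ, hpos⟩ := hξ
  have hdir : (ξ 1 / ξ 0) ^ 2 + (ξ 2 / ξ 0) ^ 2 = 1 := by
    unfold Qr at hQ
    field_simp
    linarith
  refine ⟨rotMatrix (ξ 1 / ξ 0) (ξ 2 / ξ 0) * boostMatrix (ξ 0),
    mul_mem_Gso (rotMatrix_mem_Gso hdir) (boostMatrix_mem_Gso hpos), ?_⟩
  rw [← mulVec_mulVec, boostMatrix_mulVec_baseHorocycle, mulVec_smul,
    rotMatrix_mulVec_baseHorocycle]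
  ext i
  fin_cases i <;> simp [mul_div_cancel₀, hpos.ne']

theorem Hor_eq_image_Gso : Hor = (· *ᵥ baseHorocycle) '' Gso := by
  ext ξ
  refine ⟨exists_mem_Gso_mulVec_baseHorocycle_eq, ?_⟩
  rintro ⟨g, hg, rfl⟩
  exact mulVec_mem_Hor_of_mem_Gso hg baseHorocycle_mem_Hor

end Transitivity

section Complexification

variable {g : Matrix (Fin 3) (Fin 3) ℝ}

theorem lorentzForm_act_act (hg : g ∈ Gso) (z w : Fin 3 → ℂ) :
    lorentzForm ℂ (act g z) (act g w) = lorentzForm ℂ z w := by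
  have hη : (diagonal ![1, -1, -1] : Matrix (Fin 3) (Fin 3) ℂ) = eta3.map Complex.ofRealHom := by
    ext i j
    fin_cases i <;> fin_cases j <;> simp [eta3]
  apply lorentzForm_mulVec_mulVec (g := g.map Complex.ofRealHom)
  rw [hη, ← transpose_map, ← Matrix.map_mul, ← Matrix.map_mul, hg.1]

theorem act_ofReal (g : Matrix (Fin 3) (Fin 3) ℝ) (x : Fin 3 → ℝ) :
    act g (Complex.ofReal ∘ x) = Complex.ofReal ∘ (g *ᵥ x) := by
  ext i
  exact (RingHom.map_mulVec Complex.ofRealHom g x i).symm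

theorem act_bijective_of_mem_Gso (hg : g ∈ Gso) : Function.Bijective (act g) := by
  have hunit : IsUnit g := (isUnit_iff_isUnit_det g).mpr (by simp [hg.2.1])
  have hunit_map : IsUnit (g.map Complex.ofRealHom) := hunit.map Complex.ofRealHom.mapMatrix
  exact ⟨mulVec_injective_iff_isUnit.mpr hunit_map, mulVec_surjective_iff_isUnit.mpr hunit_map⟩

theorem nmat_mulVec_x0c (z : ℂ) : nmat z *ᵥ x0c = ![1 + z ^ 2 / 2, z, z ^ 2 / 2] := by
  ext i
  fin_cases i <;> simp [nmat, x0c, mulVec, dotProduct, Fin.sum_univ_three]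

theorem exists_eq_nmat_mulVec_x0c_iff (w : Fin 3 → ℂ) :
    (∃ z, w = nmat z *ᵥ x0c) ↔
      Qc w = 1 ∧ lorentzForm ℂ w (Complex.ofReal ∘ baseHorocycle) = 1 := by
  simp only [nmat_mulVec_x0c]
  constructor
  · rintro ⟨z, rfl⟩
    constructor
    · change (1 + z ^ 2 / 2) ^ 2 - z ^ 2 - (z ^ 2 / 2) ^ 2 = 1
      ring
    · simp [lorentzForm_apply, baseHorocycle]
  · rintro ⟨hQ, hform⟩
    have hdiff : w 0 - w 2 = 1 := by
      simpa [lorentzForm_apply, baseHorocycle] using hform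
    have hsum : w 0 + w 2 = 1 + w 1 ^ 2 := by
      unfold Qc at hQ
      linear_combination hQ - (w 0 + w 2) * hdiff
    refine ⟨w 1, ?_⟩
    ext i
    fin_cases i
    · change w 0 = 1 + w 1 ^ 2 / 2
      linear_combination (hsum + hdiff) / 2
    · rfl
    · change w 2 = w 1 ^ 2 / 2
      linear_combination (hsum - hdiff) / 2

theorem exists_eq_act_nmat_mulVec_x0c_iff (hg : g ∈ Gso) (w : Fin 3 → ℂ) :
    (∃ z, w = act g (nmat z *ᵥ x0c)) ↔
      Qc w = 1 ∧ lorentzForm ℂ w (Complex.ofReal ∘ (g *ᵥ baseHorocycle)) = 1 := by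
  obtain ⟨v, rfl⟩ := (act_bijective_of_mem_Gso hg).surjective w
  simp only [(act_bijective_of_mem_Gso hg).injective.eq_iff, exists_eq_nmat_mulVec_x0c_iff,
    ← act_ofReal, Qc_eq_lorentzForm, lorentzForm_act_act hg]

end Complexification

/-- `Ξ_N = {w ∈ X_ℂ : ∃ ξ ∈ Hor(X), w·ξ = 1}`. -/
theorem stmt_7 :
    XiN = {w : Fin 3 → ℂ | Qc w = 1 ∧ ∃ ξ ∈ Hor,
      w 0 * (ξ 0 : ℂ) - w 1 * (ξ 1 : ℂ) - w 2 * (ξ 2 : ℂ) = 1} := by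
  ext w
  calc w ∈ XiN
    _ ↔ ∃ g ∈ Gso, Qc w = 1 ∧ lorentzForm ℂ w (Complex.ofReal ∘ (g *ᵥ baseHorocycle)) = 1 :=
      exists_congr fun g => and_congr_right fun hg => exists_eq_act_nmat_mulVec_x0c_iff hg w
    _ ↔ Qc w = 1 ∧ ∃ ξ ∈ Hor, lorentzForm ℂ w (Complex.ofReal ∘ ξ) = 1 := by
      simp only [Hor_eq_image_Gso, Set.exists_mem_image]
      tauto
    _ ↔ _ := by
      simp only [lorentzForm_apply]
      rfl
end

section
/- Let a < b be real numbers with (a,b) ∩ (−1,1) ≠ ∅ and min(|a|, |b|) > 1. Then the action of G on Ξ_{a,b} is not proper: there exists a compact subset C ⊆ Ξ_{a,b} such that the set {g ∈ G : (g·C) ∩ C ≠ ∅} is not compact. -/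
open Matrix

/-- `Ξ_{a,b} = G·{n_{iy}·x₀ : a < y < b}`. -/
noncomputable def XiAB (a b : ℝ) : Set (Fin 3 → ℂ) :=
  {w | ∃ g ∈ Gso, ∃ y : ℝ, a < y ∧ y < b ∧
    w = act g ((nmat (Complex.I * (y : ℂ))).mulVec x0c)}

/-!
The half-turn boost with parameter `t` sends `n_{iy}·x₀` to `n_{-iy}·x₀` when `y² = 1 - e^{-t}`.
Hence for every `t ≥ 0` it moves a point of the compact arc `{n_{iy}·x₀ : |y| ≤ 1}` to a point
of this arc, while its entry `cosh t` is unbounded. The hypotheses give `a < -1` and `1 < b`, so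
that `Ξ_{a,b}` contains the arc, including the endpoints `y = ±1` approached as `t → ∞`.
-/

/-- The point `n_z·x₀` of the complex horocycle through `x₀`. -/
noncomputable def horocyclePoint (z : ℂ) : Fin 3 → ℂ := nmat z *ᵥ x0c

lemma horocyclePoint_eq (z : ℂ) : horocyclePoint z = ![1 + z ^ 2 / 2, z, z ^ 2 / 2] := by
  ext i
  fin_cases i <;> simp [horocyclePoint, nmat, x0c, mulVec, dotProduct, Fin.sum_univ_three]

lemma continuous_horocyclePoint : Continuous horocyclePoint := by
  rw [funext horocyclePoint_eq]
  fun_prop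

/-- The half-turn in the coordinates `1, 2` followed by the boost with rapidity `-t` in the
coordinates `0, 2`. It supplies the elements of `G` witnessing that the action is not proper. -/
noncomputable def halfTurnBoost (t : ℝ) : Matrix (Fin 3) (Fin 3) ℝ :=
  !![Real.cosh t, 0, Real.sinh t;
     0, -1, 0;
     -Real.sinh t, 0, -Real.cosh t]

lemma halfTurnBoost_mem_Gso (t : ℝ) : halfTurnBoost t ∈ Gso := by
  have cosh_sq_sub_sinh_sq := Real.cosh_sq_sub_sinh_sq t
  refine ⟨?preserves_form, ?det_eq_one, ?corner_pos⟩
  case preserves_form =>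
    ext i j
    fin_cases i <;> fin_cases j <;>
      simp [halfTurnBoost, eta3, mul_apply, Fin.sum_univ_three, diagonal] <;>
      linarith
  case det_eq_one =>
    rw [halfTurnBoost, det_fin_three]
    simp only [of_apply, cons_val]
    linarith
  case corner_pos => exact Real.cosh_pos t

lemma act_halfTurnBoost (t : ℝ) (u v w : ℂ) :
    act (halfTurnBoost t) ![u, v, w] =
      ![Complex.cosh t * u + Complex.sinh t * w, -v,
        -(Complex.sinh t * u + Complex.cosh t * w)] := by
  ext i
  fin_cases i <;>
    simp [act, halfTurnBoost, mulVec, dotProduct, Fin.sum_univ_three, add_comm]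

lemma act_halfTurnBoost_horocyclePoint {t : ℝ} {z : ℂ} (hz : 1 + z ^ 2 = Complex.exp (-t)) :
    act (halfTurnBoost t) (horocyclePoint z) = horocyclePoint (-z) := by
  have exp_mul : Complex.exp t * (1 + z ^ 2) = 1 := by
    rw [hz, ← Complex.exp_add, add_neg_cancel, Complex.exp_zero]
  have time_coord : Complex.cosh t * (1 + z ^ 2 / 2) + Complex.sinh t * (z ^ 2 / 2) =
      1 + z ^ 2 / 2 := by
    rw [Complex.cosh, Complex.sinh, ← hz]
    linear_combination exp_mul / 2
  have space_coord : -(Complex.sinh t * (1 + z ^ 2 / 2) + Complex.cosh t * (z ^ 2 / 2)) =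
      z ^ 2 / 2 := by
    rw [Complex.cosh, Complex.sinh, ← hz]
    linear_combination -exp_mul / 2
  rw [horocyclePoint_eq, act_halfTurnBoost, time_coord, space_coord, horocyclePoint_eq, neg_sq]

lemma not_isCompact_of_halfTurnBoost_mem {S : Set (Matrix (Fin 3) (Fin 3) ℝ)}
    (hS : ∀ t : ℝ, 0 ≤ t → halfTurnBoost t ∈ S) : ¬ IsCompact S := by
  intro hcompact
  obtain ⟨M, hM⟩ := hcompact.bddAbove_image (continuous_id.matrix_elem 0 0).continuousOn
  have cosh_le : Real.cosh |M| ≤ M := hM ⟨_, hS |M| (abs_nonneg M), rfl⟩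
  have lt_cosh : |M| < Real.cosh |M| :=
    (Real.self_le_sinh_iff.2 (abs_nonneg M)).trans_lt (Real.sinh_lt_cosh _)
  exact (lt_cosh.trans_le cosh_le).not_ge (le_abs_self M)

/-- The arc `{n_{iy}·x₀ : -1 ≤ y ≤ 1}`, the compact set on which properness fails. -/
def horocycleArc : Set (Fin 3 → ℂ) :=
  (fun y : ℝ => horocyclePoint (Complex.I * y)) '' Set.Icc (-1) 1

lemma isCompact_horocycleArc : IsCompact horocycleArc :=
  isCompact_Icc.image (continuous_horocyclePoint.comp (by fun_prop))

lemma one_mem_Gso : 1 ∈ Gso := ⟨by simp, by simp, by simp⟩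

lemma act_one (w : Fin 3 → ℂ) : act 1 w = w := by simp [act]

lemma horocyclePoint_mem_XiAB {a b y : ℝ} (hay : a < y) (hyb : y < b) :
    horocyclePoint (Complex.I * y) ∈ XiAB a b :=
  ⟨1, one_mem_Gso, y, hay, hyb, (act_one _).symm⟩

lemma horocycleArc_subset_XiAB {a b : ℝ} (ha : a < -1) (hb : 1 < b) :
    horocycleArc ⊆ XiAB a b := by
  rintro _ ⟨y, ⟨hy_ge, hy_le⟩, rfl⟩
  exact horocyclePoint_mem_XiAB (ha.trans_le hy_ge) (hy_le.trans_lt hb)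

lemma exists_mem_horocycleArc_act_halfTurnBoost_mem {t : ℝ} (ht : 0 ≤ t) :
    ∃ w ∈ horocycleArc, act (halfTurnBoost t) w ∈ horocycleArc := by
  obtain ⟨y, hy_nonneg, hy_le, hy_sq⟩ : ∃ y : ℝ, 0 ≤ y ∧ y ≤ 1 ∧ y ^ 2 = 1 - Real.exp (-t) :=
    ⟨√(1 - Real.exp (-t)), Real.sqrt_nonneg _,
      Real.sqrt_le_one.2 (sub_le_self _ (Real.exp_pos _).le),
      Real.sq_sqrt (sub_nonneg.2 (Real.exp_le_one_iff.2 (neg_nonpos.2 ht)))⟩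
  have one_add_sq : 1 + (Complex.I * y) ^ 2 = Complex.exp (-t) := by
    rw [mul_pow, Complex.I_sq, ← Complex.ofReal_pow, hy_sq]
    push_cast
    ring
  refine ⟨_, ⟨y, ⟨by linarith, hy_le⟩, rfl⟩, -y, ⟨by linarith, by linarith⟩, ?_⟩
  simp [act_halfTurnBoost_horocyclePoint one_add_sq]

/-- if `(a,b) ∩ (-1,1) ≠ ∅` and `min(|a|,|b|) > 1` then the `G`-action on
`Ξ_{a,b}` is not proper: there is a compact `C ⊆ Ξ_{a,b}` with
`{g ∈ G : gC ∩ C ≠ ∅}` non-compact. -/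
theorem stmt_9 (a b : ℝ) (hab : a < b)
    (hmeet : (Set.Ioo a b ∩ Set.Ioo (-1 : ℝ) 1).Nonempty)
    (ha : 1 < |a|) (hb : 1 < |b|) :
    ∃ C : Set (Fin 3 → ℂ), C ⊆ XiAB a b ∧ IsCompact C ∧
      ¬ IsCompact {g : Matrix (Fin 3) (Fin 3) ℝ | g ∈ Gso ∧ ∃ w ∈ C, act g w ∈ C} := by
  obtain ⟨y, ⟨hay, hyb⟩, hy_gt, hy_lt⟩ := hmeet
  have ha_lt : a < -1 := by
    rcases lt_abs.1 ha with h | h <;> linarith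
  have hb_gt : 1 < b := by
    rcases lt_abs.1 hb with h | h <;> linarith
  exact ⟨horocycleArc, horocycleArc_subset_XiAB ha_lt hb_gt, isCompact_horocycleArc,
    not_isCompact_of_halfTurnBoost_mem fun t ht =>
      ⟨halfTurnBoost_mem_Gso t, exists_mem_horocycleArc_act_halfTurnBoost_mem ht⟩⟩
end
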